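/- arXiv:1104.4551 — 9 statements merged into one kernel-verified Lean document; each statement's English description precedes it below -/
import Mathlib

section
/- (Malament's theorem.) Let A be an inertial observer in Minkowski spacetime, i.e., an affine line A = {p + t•v : t ∈ ℝ} with v a future-directed unit timelike vector. Suppose R is a relation on Minkowski spacetime such that: (i) R is an equivalence relation; (ii) R is nontrivial, meaning not all pairs of events are related by R and at least one event lying on A is related by R to some event not lying on A; (iii) R is invariant under every causal automorphism f that stabilizes A (f(A) = A), i.e., for all events x, y: x R y ↔ f(x) R f(y). Then R is the Poincaré–Einstein simultaneity relation relative to A: x R y ↔ η(x − y, v) = 0. -/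
/-!
Write every event as `p + t • v + s` with `s` orthogonal to `v`; on the orthogonal complement of
`v` the form is negative definite. The symmetries used are the translations along `v`, the
homotheties centred at `p` (of any nonzero ratio), and the reflections in vectors `n ⊥ v`, based
at `p`.

By hypothesis `p` is, after a translation, related to some `p + t • v + s` with `s ≠ 0`, `s ⊥ v`.
A homothety followed by a reflection carries `s` to any `s' ⊥ v` with `eta s' s' = l ^ 2 * eta s s`
(`orbit_rel`), so every event is related to some event of the observer's line. If two distinct
events of the line were related, homotheties and translations would make the whole line, and hence
the whole spacetime, a single class (`collapse`). If `t ≠ 0`, then the double cone from `p` and its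
translate from `p + (2 * t) • v` meet in `p + t • v + s`, which relates two distinct events of the
line. So `t = 0`: each simultaneity hyperplane lies in one class, and different hyperplanes lie in
different classes.
-/

/-- Minkowski spacetime: ℝ⁴ as functions `Fin 4 → ℝ`. -/
abbrev M4 : Type := Fin 4 → ℝ

/-- The Minkowski bilinear form. -/
def eta (x y : M4) : ℝ := x 0 * y 0 - x 1 * y 1 - x 2 * y 2 - x 3 * y 3

/-- Causal connectibility. -/
def kappa (x y : M4) : Prop := eta (x - y) (x - y) ≥ 0

lemma eta_orth_nonpos {v s : M4} (hv : eta v v = 1) (hs : eta s v = 0) (h0 : 0 ≤ eta s s) :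
    s = 0 := by
  simp only [eta] at hv hs h0
  -- Cauchy–Schwarz for the spatial parts, in the form of Lagrange's identity
  have hL : (s 1 ^ 2 + s 2 ^ 2 + s 3 ^ 2) * (v 1 ^ 2 + v 2 ^ 2 + v 3 ^ 2) -
      (s 1 * v 1 + s 2 * v 2 + s 3 * v 3) ^ 2 =
      (s 1 * v 2 - s 2 * v 1) ^ 2 + (s 1 * v 3 - s 3 * v 1) ^ 2
        + (s 2 * v 3 - s 3 * v 2) ^ 2 := by ring
  have e1 : s 1 * v 1 + s 2 * v 2 + s 3 * v 3 = s 0 * v 0 := by linarith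
  have e2 : v 1 ^ 2 + v 2 ^ 2 + v 3 ^ 2 = v 0 ^ 2 - 1 := by linarith
  rw [e1, e2] at hL
  have hpos : 0 ≤ (s 0 ^ 2 - s 1 ^ 2 - s 2 ^ 2 - s 3 ^ 2) * v 0 ^ 2 :=
    mul_nonneg (by linarith) (sq_nonneg _)
  have hsum : s 1 ^ 2 + s 2 ^ 2 + s 3 ^ 2 ≤ 0 := by
    nlinarith [sq_nonneg (s 1 * v 2 - s 2 * v 1), sq_nonneg (s 1 * v 3 - s 3 * v 1),
      sq_nonneg (s 2 * v 3 - s 3 * v 2)]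
  have h1 : s 1 = 0 := by
    apply pow_eq_zero_iff (two_ne_zero) |>.1
    nlinarith [sq_nonneg (s 1), sq_nonneg (s 2), sq_nonneg (s 3)]
  have h2 : s 2 = 0 := by
    apply pow_eq_zero_iff (two_ne_zero) |>.1
    nlinarith [sq_nonneg (s 1), sq_nonneg (s 2), sq_nonneg (s 3)]
  have h3 : s 3 = 0 := by
    apply pow_eq_zero_iff (two_ne_zero) |>.1
    nlinarith [sq_nonneg (s 1), sq_nonneg (s 2), sq_nonneg (s 3)]
  have hv0 : v 0 ≠ 0 := by
    intro h
    rw [h] at hv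
    nlinarith [sq_nonneg (v 1), sq_nonneg (v 2), sq_nonneg (v 3)]
  have h00 : s 0 = 0 := by
    rw [h1, h2, h3] at e1
    rcases mul_eq_zero.1 (show s 0 * v 0 = 0 by linarith) with h | h
    · exact h
    · exact absurd h hv0
  ext i
  fin_cases i <;> simpa

lemma eta_orth_neg {v s : M4} (hv : eta v v = 1) (hs : eta s v = 0) (h0 : s ≠ 0) :
    eta s s < 0 := by
  by_contra h
  exact h0 (eta_orth_nonpos hv hs (not_lt.1 h))

/-- The linear reflection in the `eta`-orthogonal hyperplane of `n`; meaningful when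
`eta n n ≠ 0` (otherwise it is the identity, since division by zero gives zero). -/
noncomputable def etaRefl (n x : M4) : M4 := x - (2 * eta x n / eta n n) • n

lemma etaRefl_involutive (n : M4) (hn : eta n n ≠ 0) (x : M4) :
    etaRefl n (etaRefl n x) = x := by
  have h : eta (etaRefl n x) n = - eta x n := by
    have : eta (etaRefl n x) n = eta x n - (2 * eta x n / eta n n) * eta n n := by
      simp only [etaRefl, eta, Pi.sub_apply, Pi.smul_apply, smul_eq_mul]; ring
    rw [this]; field_simp; ring
  have e : etaRefl n (etaRefl n x) = etaRefl n x - (2 * eta (etaRefl n x) n / eta n n) • n := rfl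
  rw [e, h]
  ext i
  simp only [etaRefl, Pi.sub_apply, Pi.smul_apply, smul_eq_mul]
  ring

lemma etaRefl_sub (n x y : M4) : etaRefl n x - etaRefl n y = etaRefl n (x - y) := by
  ext i
  simp only [etaRefl, eta, Pi.sub_apply, Pi.smul_apply, smul_eq_mul]
  ring

lemma eta_etaRefl (n : M4) (hn : eta n n ≠ 0) (x : M4) :
    eta (etaRefl n x) (etaRefl n x) = eta x x := by
  have : eta (etaRefl n x) (etaRefl n x) = eta x x - 2 * (2 * eta x n / eta n n) * eta x n
      + (2 * eta x n / eta n n) ^ 2 * eta n n := by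
    generalize hc : 2 * eta x n / eta n n = c
    simp only [etaRefl, hc]
    simp only [eta, Pi.sub_apply, Pi.smul_apply, smul_eq_mul]
    ring
  rw [this]; field_simp; ring

lemma etaRefl_orth (n x : M4) (h : eta x n = 0) : etaRefl n x = x := by
  simp [etaRefl, h]

lemma etaRefl_swap {a b : M4} (h : eta a a = eta b b) (hn : eta (a - b) (a - b) ≠ 0) :
    etaRefl (a - b) a = b := by
  have : 2 * eta a (a - b) = eta (a - b) (a - b) := by
    simp only [eta, Pi.sub_apply] at h ⊢; linarith
  simp [etaRefl, this, div_self hn]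

/-- Invariance of `R` under every bijection that scales the form by a positive factor and whose
restriction to the line through `p` in direction `v` is a bijection of that line. -/
def SimInvariant (p v : M4) (R : M4 → M4 → Prop) : Prop :=
  ∀ (f g : M4 → M4) (c : ℝ), 0 < c → (∀ x, g (f x) = x) → (∀ x, f (g x) = x) →
    (∀ x y, eta (f x - f y) (f x - f y) = c * eta (x - y) (x - y)) →
    (∀ t : ℝ, ∃ t' : ℝ, f (p + t • v) = p + t' • v) →
    (∀ t : ℝ, ∃ t' : ℝ, g (p + t • v) = p + t' • v) →
    ∀ x y, R x y ↔ R (f x) (f y)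

section

variable {p v : M4} {R : M4 → M4 → Prop}

lemma SimInvariant.translate (h : SimInvariant p v R) (τ : ℝ) (x y : M4) :
    R x y ↔ R (x + τ • v) (y + τ • v) := by
  refine h (fun x => x + τ • v) (fun x => x - τ • v) 1 one_pos (by simp) (by simp) (by simp)
    (fun t => ⟨t + τ, ?_⟩) (fun t => ⟨t - τ, ?_⟩) x y
  · module
  · module

lemma SimInvariant.dilate (h : SimInvariant p v R) {l : ℝ} (hl : l ≠ 0) (a b : M4) :
    R (p + a) (p + b) ↔ R (p + l • a) (p + l • b) := by
  have := h (fun x => p + l • (x - p)) (fun x => p + l⁻¹ • (x - p)) (l ^ 2) (by positivity)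
    (by intro x; simp [smul_smul, hl]) (by intro x; simp [smul_smul, hl])
    (by intro x y; simp only [eta, Pi.sub_apply, Pi.add_apply, Pi.smul_apply, smul_eq_mul]; ring)
    (fun t => ⟨l * t, by simp [smul_smul]⟩) (fun t => ⟨l⁻¹ * t, by simp [smul_smul]⟩)
    (p + a) (p + b)
  simpa using this

lemma SimInvariant.reflect (h : SimInvariant p v R) {n : M4} (hn : eta n n ≠ 0)
    (hv : eta v n = 0) (a b : M4) :
    R (p + a) (p + b) ↔ R (p + etaRefl n a) (p + etaRefl n b) := by
  have hA : ∀ t : ℝ, etaRefl n (t • v) = t • v := by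
    intro t
    apply etaRefl_orth
    have : eta (t • v) n = t * eta v n := by
      simp only [eta, Pi.smul_apply, smul_eq_mul]; ring
    rw [this, hv, mul_zero]
  have := h (fun x => p + etaRefl n (x - p)) (fun x => p + etaRefl n (x - p)) 1 one_pos
    (by intro x; simp [etaRefl_involutive n hn]) (by intro x; simp [etaRefl_involutive n hn])
    (by intro x y; simp [etaRefl_sub, eta_etaRefl n hn])
    (fun t => ⟨t, by simp [hA]⟩) (fun t => ⟨t, by simp [hA]⟩)
    (p + a) (p + b)
  simpa using this

/-- The orbit of one pair under homotheties, reflections and translations. Negative `l` is allowed,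
which makes it a double cone. -/
lemma orbit_rel (h : SimInvariant p v R) (hv : eta v v = 1) {t : ℝ} {s : M4} (hs : eta s v = 0)
    (hR : R p (p + (t • v + s))) {l : ℝ} (hl : l ≠ 0) {s' : M4} (hs' : eta s' v = 0)
    (hls : eta s' s' = l ^ 2 * eta s s) (τ : ℝ) :
    R (p + τ • v) (p + (τ + l * t) • v + s') := by
  have h1 : R (p + (0 : M4)) (p + l • (t • v + s)) := by
    have := (h.dilate hl 0 (t • v + s)).1 (by simpa using hR)
    simpa using this
  have h2 : R (p + (0 : M4)) (p + ((l * t) • v + s')) := by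
    by_cases hE : l • s = s'
    · have e : l • (t • v + s) = (l * t) • v + s' := by rw [← hE]; module
      rwa [e] at h1
    · have hnv : eta (l • s - s') v = 0 := by
        have : eta (l • s - s') v = l * eta s v - eta s' v := by
          simp only [eta, Pi.sub_apply, Pi.smul_apply, smul_eq_mul]; ring
        rw [this, hs, hs']; ring
      have hn : eta (l • s - s') (l • s - s') ≠ 0 :=
        (eta_orth_neg hv hnv (sub_ne_zero.2 hE)).ne
      have hvn : eta v (l • s - s') = 0 := by
        rw [← hnv]; simp only [eta]; ring
      have hsw : etaRefl (l • s - s') (l • s) = s' := by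
        apply etaRefl_swap _ hn
        rw [hls]; simp only [eta, Pi.smul_apply, smul_eq_mul]; ring
      have h3 := (h.reflect hn hvn _ _).1 h1
      have e0 : etaRefl (l • s - s') 0 = 0 := etaRefl_orth _ _ (by simp [eta])
      have e1 : etaRefl (l • s - s') (l • (t • v + s)) = (l * t) • v + s' := by
        have ea : etaRefl (l • s - s') ((l * t) • v) = (l * t) • v := by
          apply etaRefl_orth
          have : eta ((l * t) • v) (l • s - s') = (l * t) * eta v (l • s - s') := by
            simp only [eta, Pi.smul_apply, smul_eq_mul]; ring
          rw [this, hvn, mul_zero]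
        have eb := etaRefl_sub (l • s - s') (l • (t • v + s)) ((l * t) • v)
        have ec : l • (t • v + s) - (l * t) • v = l • s := by module
        rw [ec, hsw, ea] at eb
        rw [sub_eq_iff_eq_add.1 eb, add_comm]
      rwa [e0, e1] at h3
  have h3 := (h.translate τ _ _).1 h2
  have ea : p + (0 : M4) + τ • v = p + τ • v := by module
  have eb : p + ((l * t) • v + s') + τ • v = p + (τ + l * t) • v + s' := by module
  rwa [ea, eb] at h3

/-- If every event is related to some event of the line, and two distinct events of the line are
related, then all events are related. -/
lemma collapse (h : SimInvariant p v R) (he : Equivalence R)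
    (hall : ∀ y, ∃ τ : ℝ, R (p + τ • v) y) {a b : ℝ} (hab : a ≠ b)
    (hR : R (p + a • v) (p + b • v)) (x y : M4) : R x y := by
  have h1 := (h.translate (-a) _ _).1 hR
  have ea : p + a • v + (-a) • v = p + (0 : M4) := by module
  have eb : p + b • v + (-a) • v = p + (b - a) • v := by module
  rw [ea, eb] at h1
  have hd : b - a ≠ 0 := sub_ne_zero.2 hab.symm
  have key : ∀ m : ℝ, R (p + (0 : M4)) (p + m • v) := by
    intro m
    by_cases hm : m = 0
    · rw [hm, zero_smul]; exact he.refl _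
    · have h2 := (h.dilate (div_ne_zero hm hd) _ _).1 h1
      rwa [smul_zero, smul_smul, div_mul_cancel₀ m hd] at h2
  obtain ⟨τ, hx⟩ := hall x
  obtain ⟨σ, hy⟩ := hall y
  exact he.trans (he.symm hx) (he.trans (he.symm (key τ)) (he.trans (key σ) hy))

end

/-- Malament's theorem: for an inertial observer `A = {p + t•v}` with `v` a
future-directed unit timelike vector, any nontrivial equivalence relation
invariant under all causal automorphisms stabilizing `A` is the
Poincaré–Einstein simultaneity relation relative to `A`. -/
theorem malament (p v : M4) (hunit : eta v v = 1) (hfut : v 0 > 0)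
    (A : Set M4) (hA : A = {x | ∃ t : ℝ, x = p + t • v})
    (R : M4 → M4 → Prop)
    (hequiv : Equivalence R)
    (hnontriv₁ : ¬ ∀ x y : M4, R x y)
    (hnontriv₂ : ∃ a ∈ A, ∃ x ∉ A, R a x)
    (hinv : ∀ f : M4 → M4, Function.Bijective f →
      (∀ x y : M4, kappa x y ↔ kappa (f x) (f y)) →
      f '' A = A →
      ∀ x y : M4, R x y ↔ R (f x) (f y)) :
    ∀ x y : M4, R x y ↔ eta (x - y) v = 0 := by
  have hS : SimInvariant p v R := by
    intro f g c hc hgf hfg hsc hfA hgA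
    refine hinv f ⟨Function.LeftInverse.injective hgf, Function.RightInverse.surjective hfg⟩ ?_ ?_
    · intro x y
      simp only [kappa, hsc, ge_iff_le]
      exact (mul_nonneg_iff_of_pos_left hc).symm
    · subst hA
      ext z
      constructor
      · rintro ⟨_, ⟨t, rfl⟩, rfl⟩
        exact hfA t
      · rintro ⟨t, rfl⟩
        exact ⟨g (p + t • v), hgA t, hfg _⟩
  have decomp : ∀ y : M4, ∃ (τ : ℝ) (s : M4), eta s v = 0 ∧ y = p + τ • v + s ∧
      τ = eta (y - p) v := by
    intro y
    refine ⟨eta (y - p) v, y - p - eta (y - p) v • v, ?_, by module, rfl⟩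
    have : eta (y - p - eta (y - p) v • v) v = eta (y - p) v - eta (y - p) v * eta v v := by
      generalize hc : eta (y - p) v = c
      rw [← hc]
      simp only [eta, Pi.sub_apply, Pi.smul_apply, smul_eq_mul]; ring
    rw [this, hunit]; ring
  obtain ⟨a, ha, x₀, hx₀, hax⟩ := hnontriv₂
  rw [hA] at ha hx₀
  obtain ⟨α, rfl⟩ := ha
  obtain ⟨β, s, hs, rfl, -⟩ := decomp x₀
  have hs0 : s ≠ 0 := by
    rintro rfl
    exact hx₀ ⟨β, by simp⟩
  have hneg := eta_orth_neg hunit hs hs0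
  obtain ⟨t, ht⟩ : ∃ t, t = β - α := ⟨_, rfl⟩
  have hR : R p (p + (t • v + s)) := by
    have h1 := (hS.translate (-α) _ _).1 hax
    have ea : p + α • v + (-α) • v = p := by module
    have eb : p + β • v + s + (-α) • v = p + (t • v + s) := by rw [ht]; module
    rwa [ea, eb] at h1
  have cone : ∀ s', eta s' v = 0 → ∃ l : ℝ, ∀ τ : ℝ,
      R (p + τ • v) (p + (τ + l * t) • v + s') := by
    intro s' hs'
    by_cases h0 : s' = 0
    · refine ⟨0, fun τ => ?_⟩
      simpa [h0] using hequiv.refl _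
    · have hneg' := eta_orth_neg hunit hs' h0
      have hq : 0 < eta s' s' / eta s s := div_pos_of_neg_of_neg hneg' hneg
      refine ⟨√(eta s' s' / eta s s), fun τ =>
        orbit_rel hS hunit hs hR (Real.sqrt_pos.2 hq).ne' hs' ?_ τ⟩
      rw [Real.sq_sqrt hq.le, div_mul_cancel₀ _ hneg.ne]
  have hall : ∀ y, ∃ τ : ℝ, R (p + τ • v) y := by
    intro y
    obtain ⟨σ, s', hs', rfl, -⟩ := decomp y
    obtain ⟨l, hl⟩ := cone s' hs'
    refine ⟨σ - l * t, ?_⟩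
    simpa using hl (σ - l * t)
  have ht0 : t = 0 := by
    by_contra hne
    apply hnontriv₁
    -- the double cones from `p` and from `p + (2 * t) • v` share the event `p + t • v + s`
    have h1 := orbit_rel hS hunit hs hR one_ne_zero hs (by ring) 0
    have h2 := orbit_rel hS hunit hs hR (neg_ne_zero.2 one_ne_zero) hs (by ring) (2 * t)
    have e : (2 * t + -1 * t) = 0 + 1 * t := by ring
    rw [e] at h2
    exact collapse hS hequiv hall (a := 0) (b := 2 * t)
      (fun h => hne (by linarith)) (hequiv.trans h1 (hequiv.symm h2))
  have hplane : ∀ y, R (p + eta (y - p) v • v) y := by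
    intro y
    obtain ⟨σ, s', hs', hy, hσ⟩ := decomp y
    obtain ⟨l, hl⟩ := cone s' hs'
    have := hl σ
    rw [ht0, mul_zero, add_zero, ← hy, hσ] at this
    exact this
  intro x y
  have hxy : eta (x - y) v = eta (x - p) v - eta (y - p) v := by
    simp only [eta, Pi.sub_apply]; ring
  rw [hxy, sub_eq_zero]
  constructor
  · intro h
    by_contra hne
    exact hnontriv₁ (collapse hS hequiv hall hne
      (hequiv.trans (hplane x) (hequiv.trans h (hequiv.symm (hplane y)))))
  · intro h
    have hx := hplane x
    rw [h] at hx
    exact hequiv.trans (hequiv.symm hx) (hplane y)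
end

section
/- (Generalized Malament theorem with a time orientation.) Let A = {p + t•v : t ∈ ℝ} be an inertial observer in Minkowski spacetime, with v a future-directed unit timelike vector, and for an event x set τ(x) = η(x − p, v) and ρ(x) = √(−η(w,w)) where w = (x − p) − τ(x)•v. Suppose R is a relation on Minkowski spacetime such that: (i) R is an equivalence relation; (ii) R is nontrivial, meaning not all pairs of events are related by R and at least one event lying on A is related by R to some event not lying on A; (iii) R is invariant under every causal automorphism f that stabilizes A (f(A) = A) and is increasing on A (for a, b ∈ A, τ(a) < τ(b) implies τ(f(a)) < τ(f(b))). Then there exists a real constant c such that R is the conic relation R_c relative to A: x R y ↔ τ(x) + c·ρ(x) = τ(y) + c·ρ(y). (The case c = 0 is Poincaré–Einstein simultaneity; the cases c = 1 and c = −1 are observed simultaneity and its dual, whose classes are the backward, respectively forward, light cones with apices on A; the remaining cases are the other conic relations, whose classes are half cones with apices on A.) -/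
/-- Time coordinate of an event relative to the observer `{p + t•v}`. -/
def tau (p v x : M4) : ℝ := eta (x - p) v

/-- Spatial radius of an event relative to the observer `{p + t•v}`. -/
noncomputable def rho (p v x : M4) : ℝ :=
  Real.sqrt (-(eta ((x - p) - tau p v x • v) ((x - p) - tau p v x • v)))

theorem eta_comm (x y : M4) : eta x y = eta y x := by
  simp only [eta]; ring

theorem eta_sub_left (x y z : M4) : eta (x - y) z = eta x z - eta y z := by
  simp only [eta, Pi.sub_apply]; ring

theorem eta_smul_left (k : ℝ) (x z : M4) : eta (k • x) z = k * eta x z := by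
  simp only [eta, Pi.smul_apply, smul_eq_mul]; ring

theorem eta_sub_right (x y z : M4) : eta z (x - y) = eta z x - eta z y := by
  simp only [eta, Pi.sub_apply]; ring

theorem eta_smul_right (k : ℝ) (x z : M4) : eta z (k • x) = k * eta z x := by
  simp only [eta, Pi.smul_apply, smul_eq_mul]; ring

/-- The orthogonal complement of a unit timelike vector is negative definite, in the quantitative
form `|u|² ≤ v₀² (-η(u, u))` with `|u|` the Euclidean length of the spatial part of `u`. -/
theorem sq_le_of_orthogonal {u v : M4} (hv : eta v v = 1) (huv : eta u v = 0) :
    u 1 ^ 2 + u 2 ^ 2 + u 3 ^ 2 ≤ v 0 ^ 2 * (-eta u u) := by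
  simp only [eta] at *
  have h0 : u 0 * v 0 = u 1 * v 1 + u 2 * v 2 + u 3 * v 3 := by linarith
  have hv0 : v 0 ^ 2 = 1 + v 1 ^ 2 + v 2 ^ 2 + v 3 ^ 2 := by linarith
  -- The difference of the two sides is the defect in the Cauchy–Schwarz inequality for the spatial
  -- parts, which Lagrange's identity writes as a sum of squares.
  have key : v 0 ^ 2 * (-(u 0 * u 0 - u 1 * u 1 - u 2 * u 2 - u 3 * u 3))
      = (u 1 ^ 2 + u 2 ^ 2 + u 3 ^ 2) + ((u 1 * v 2 - u 2 * v 1) ^ 2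
        + (u 1 * v 3 - u 3 * v 1) ^ 2 + (u 2 * v 3 - u 3 * v 2) ^ 2) := by
    linear_combination (u 1 ^ 2 + u 2 ^ 2 + u 3 ^ 2) * hv0
      - (u 0 * v 0 + (u 1 * v 1 + u 2 * v 2 + u 3 * v 3)) * h0
  rw [key]
  have : 0 ≤ (u 1 * v 2 - u 2 * v 1) ^ 2
        + (u 1 * v 3 - u 3 * v 1) ^ 2 + (u 2 * v 3 - u 3 * v 2) ^ 2 := by positivity
  linarith

theorem eta_self_nonpos {u v : M4} (hv : eta v v = 1) (hfut : v 0 > 0) (huv : eta u v = 0) :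
    0 ≤ -eta u u := by
  have h := sq_le_of_orthogonal hv huv
  have h2 : 0 ≤ v 0 ^ 2 * (-eta u u) := le_trans (by positivity) h
  exact nonneg_of_mul_nonneg_right h2 (by positivity)

theorem eq_zero_of_eta_self {u v : M4} (hv : eta v v = 1) (hfut : v 0 > 0) (huv : eta u v = 0)
    (h0 : eta u u = 0) : u = 0 := by
  have h := sq_le_of_orthogonal hv huv
  rw [h0] at h
  have h1 : u 1 = 0 := by nlinarith [sq_nonneg (u 1), sq_nonneg (u 2), sq_nonneg (u 3)]
  have h2 : u 2 = 0 := by nlinarith [sq_nonneg (u 1), sq_nonneg (u 2), sq_nonneg (u 3)]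
  have h3 : u 3 = 0 := by nlinarith [sq_nonneg (u 1), sq_nonneg (u 2), sq_nonneg (u 3)]
  have h4 : u 0 = 0 := by
    simp only [eta, h1, h2, h3] at huv
    have : u 0 * v 0 = 0 := by linarith
    exact (mul_eq_zero.mp this).resolve_right hfut.ne'
  ext i
  fin_cases i <;> assumption

/-- The component of `x - p` orthogonal to `v`. -/
def spatial (p v x : M4) : M4 := (x - p) - tau p v x • v

theorem spatial_orthogonal {p v : M4} (hv : eta v v = 1) (x : M4) :
    eta (spatial p v x) v = 0 := by
  simp [spatial, eta_sub_left, eta_smul_left, hv, tau]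

theorem eq_add_spatial (p v x : M4) : x = p + tau p v x • v + spatial p v x := by
  simp [spatial]

theorem rho_sq {p v : M4} (hv : eta v v = 1) (hfut : v 0 > 0) (x : M4) :
    rho p v x ^ 2 = -eta (spatial p v x) (spatial p v x) :=
  Real.sq_sqrt (eta_self_nonpos hv hfut (spatial_orthogonal hv x))

theorem tau_point {p v : M4} (hv : eta v v = 1) (t : ℝ) : tau p v (p + t • v) = t := by
  simp [tau, eta_smul_left, hv]

theorem eq_point_of_rho_eq_zero {p v : M4} (hv : eta v v = 1) (hfut : v 0 > 0) {x : M4}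
    (hx : rho p v x = 0) : x = p + tau p v x • v := by
  have h := rho_sq (p := p) hv hfut x
  rw [hx] at h
  have := eq_zero_of_eta_self hv hfut (spatial_orthogonal (p := p) hv x) (by linarith)
  simpa [this] using eq_add_spatial p v x

/-- Transitivity of the isotropy group of `v` on the spheres of its orthogonal complement, by the
reflection in the hyperplane orthogonal to `w - w'`. -/
theorem exists_isometry {v w w' : M4} (hv : eta v v = 1) (hfut : v 0 > 0)
    (hw : eta w v = 0) (hw' : eta w' v = 0) (hww : eta w w = eta w' w') :
    ∃ L : M4 → M4, (∀ x, L (L x) = x) ∧ (∀ x y, L (x - y) = L x - L y) ∧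
      (∀ (k : ℝ) x, L (k • x) = k • L x) ∧ (∀ x, eta (L x) (L x) = eta x x) ∧
      L v = v ∧ L w = w' := by
  rcases eq_or_ne w w' with rfl | hne
  · exact ⟨id, by simp⟩
  obtain ⟨u, hu⟩ : ∃ u, u = w - w' := ⟨_, rfl⟩
  have huv : eta u v = 0 := by rw [hu, eta_sub_left, hw, hw', sub_zero]
  have huu : eta u u ≠ 0 := fun h =>
    hne (sub_eq_zero.mp (hu ▸ eq_zero_of_eta_self hv hfut huv h))
  refine ⟨fun x => x - (2 * eta x u / eta u u) • u, fun x => ?_, fun x y => ?_, fun k x => ?_,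
    fun x => ?_, ?_, ?_⟩
  · have : eta (x - (2 * eta x u / eta u u) • u) u = -eta x u := by
      rw [eta_sub_left, eta_smul_left]; field_simp; ring
    simp only [this]
    module
  · simp only [eta_sub_left]
    module
  · simp only [eta_smul_left]
    module
  · simp only [eta_sub_left, eta_sub_right, eta_smul_left, eta_smul_right, eta_comm u x]
    field_simp
    ring
  · simp [eta_comm v u, huv]
  · have h : 2 * eta w u / eta u u = 1 := by
      rw [div_eq_one_iff_eq huu, hu]
      simp only [eta_sub_left, eta_sub_right, eta_comm w' w]
      linarith
    simp only [h, one_smul]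
    rw [hu, sub_sub_cancel]

/-- A relation invariant under the causal automorphisms that stabilize `A` and increase on it is
preserved by every composite of an isometry fixing `v`, a positive dilation and a translation along
`A`. The isometry is an involution, which suffices for reflections and the identity. -/
theorem invariant_of_isometry {p v : M4} (hv : eta v v = 1) {R : M4 → M4 → Prop}
    (hinv : ∀ f : M4 → M4, Function.Bijective f →
      (∀ x y : M4, kappa x y ↔ kappa (f x) (f y)) →
      f '' {x | ∃ t : ℝ, x = p + t • v} = {x | ∃ t : ℝ, x = p + t • v} →
      (∀ a ∈ {x | ∃ t : ℝ, x = p + t • v}, ∀ b ∈ {x | ∃ t : ℝ, x = p + t • v},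
        tau p v a < tau p v b → tau p v (f a) < tau p v (f b)) →
      ∀ x y : M4, R x y ↔ R (f x) (f y))
    {L : M4 → M4} (hLL : ∀ x, L (L x) = x) (hLsub : ∀ x y, L (x - y) = L x - L y)
    (hLsmul : ∀ (k : ℝ) x, L (k • x) = k • L x) (hLeta : ∀ x, eta (L x) (L x) = eta x x)
    (hLv : L v = v) {l : ℝ} (hl : 0 < l) (s : ℝ) {x y : M4} (hxy : R x y) :
    R (p + l • L (x - p) + s • v) (p + l • L (y - p) + s • v) := by
  have hpt (t : ℝ) : p + l • L (p + t • v - p) + s • v = p + (l * t + s) • v := by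
    rw [add_sub_cancel_left, hLsmul, hLv]
    module
  refine (hinv (fun z => p + l • L (z - p) + s • v) ?_ ?_ ?_ ?_ x y).mp hxy
  · refine Function.bijective_iff_has_inverse.mpr
      ⟨fun z => p + L (l⁻¹ • (z - p - s • v)), fun z => ?_, fun z => ?_⟩
    · have : p + l • L (z - p) + s • v - p - s • v = l • L (z - p) := by module
      simp only [this, inv_smul_smul₀ hl.ne', hLL]
      module
    · simp only [add_sub_cancel_left, hLL, smul_inv_smul₀ hl.ne']
      module
  · intro a b
    have : p + l • L (a - p) + s • v - (p + l • L (b - p) + s • v) = l • L (a - b) := by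
      rw [← sub_sub_sub_cancel_right a b p, hLsub (a - p)]
      module
    simp only [kappa, this, eta_smul_left, eta_smul_right, hLeta, ge_iff_le]
    rw [mul_nonneg_iff_of_pos_left hl, mul_nonneg_iff_of_pos_left hl]
  · ext z
    constructor
    · rintro ⟨_, ⟨t, rfl⟩, rfl⟩
      exact ⟨_, hpt t⟩
    · rintro ⟨t, rfl⟩
      refine ⟨p + ((t - s) / l) • v, ⟨_, rfl⟩, ?_⟩
      simp only [hpt]
      congr 2
      field_simp
      ring
  · rintro _ ⟨t, rfl⟩ _ ⟨t', rfl⟩ h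
    rw [tau_point hv, tau_point hv] at h
    simp only [hpt, tau_point hv]
    gcongr

/-- Generalized Malament theorem with a time orientation: a nontrivial
equivalence relation invariant under all causal automorphisms stabilizing `A`
and increasing on `A` is one of the conic relations `R_c` relative to `A`. -/
theorem malament_generalized (p v : M4) (hunit : eta v v = 1) (hfut : v 0 > 0)
    (A : Set M4) (hA : A = {x | ∃ t : ℝ, x = p + t • v})
    (R : M4 → M4 → Prop)
    (hequiv : Equivalence R)
    (hnontriv₁ : ¬ ∀ x y : M4, R x y)
    (hnontriv₂ : ∃ a ∈ A, ∃ x ∉ A, R a x)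
    (hinv : ∀ f : M4 → M4, Function.Bijective f →
      (∀ x y : M4, kappa x y ↔ kappa (f x) (f y)) →
      f '' A = A →
      (∀ a ∈ A, ∀ b ∈ A, tau p v a < tau p v b → tau p v (f a) < tau p v (f b)) →
      ∀ x y : M4, R x y ↔ R (f x) (f y)) :
    ∃ c : ℝ, ∀ x y : M4,
      R x y ↔ tau p v x + c * rho p v x = tau p v y + c * rho p v y := by
  subst hA
  obtain ⟨_, ⟨t₀, rfl⟩, x₀, hx₀, hR₀⟩ := hnontriv₂
  have hr₀ : rho p v x₀ ≠ 0 := fun h => hx₀ ⟨_, eq_point_of_rho_eq_zero hunit hfut h⟩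
  have hr₀' : 0 < rho p v x₀ := lt_of_le_of_ne (Real.sqrt_nonneg _) hr₀.symm
  obtain ⟨c, hc⟩ : ∃ c, c = -(tau p v x₀ - t₀) / rho p v x₀ := ⟨_, rfl⟩
  have apex (x : M4) : R (p + (tau p v x + c * rho p v x) • v) x := by
    by_cases hx : rho p v x = 0
    · rw [hx, mul_zero, add_zero, ← eq_point_of_rho_eq_zero hunit hfut hx]
      exact hequiv.refl x
    have hx' : 0 < rho p v x := lt_of_le_of_ne (Real.sqrt_nonneg _) (Ne.symm hx)
    -- The dilation factor that adjusts the radius of `x₀` to that of `x`.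
    obtain ⟨l, hl⟩ : ∃ l, l = rho p v x / rho p v x₀ := ⟨_, rfl⟩
    have hl0 : 0 < l := hl ▸ div_pos hx' hr₀'
    obtain ⟨L, hLL, hLsub, hLsmul, hLeta, hLv, hLw⟩ :=
      exists_isometry (w := spatial p v x₀) (w' := l⁻¹ • spatial p v x) hunit hfut
        (spatial_orthogonal hunit x₀)
        (by rw [eta_smul_left, spatial_orthogonal hunit, mul_zero])
        (by
          have h1 := rho_sq (p := p) hunit hfut x₀
          have h2 := rho_sq (p := p) hunit hfut x
          rw [eta_smul_left, eta_smul_right, ← neg_eq_iff_eq_neg.mpr h1,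
            ← neg_eq_iff_eq_neg.mpr h2, hl]
          field_simp)
    have h := invariant_of_isometry hunit hinv hLL hLsub hLsmul hLeta hLv hl0
      (tau p v x - l * tau p v x₀) hR₀
    have e1 : p + l • L (p + t₀ • v - p) + (tau p v x - l * tau p v x₀) • v
        = p + (tau p v x + c * rho p v x) • v := by
      have : c * rho p v x = -(l * (tau p v x₀ - t₀)) := by rw [hc, hl]; ring
      rw [add_sub_cancel_left, hLsmul, hLv, this]
      module
    have e2 : p + l • L (x₀ - p) + (tau p v x - l * tau p v x₀) • v = x := by
      have h3 : L (x₀ - p) = l⁻¹ • spatial p v x + tau p v x₀ • v := by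
        rw [← sub_eq_iff_eq_add, ← hLw, spatial, hLsub (x₀ - p), hLsmul, hLv]
      conv_rhs => rw [eq_add_spatial p v x]
      rw [h3, smul_add, smul_inv_smul₀ hl0.ne']
      module
    rwa [e1, e2] at h
  refine ⟨c, fun x y => ⟨fun hxy => ?_, fun h => ?_⟩⟩
  · by_contra hne
    obtain ⟨a, b, hab, hR⟩ : ∃ a b : ℝ, a < b ∧ R (p + a • v) (p + b • v) := by
      have h := hequiv.trans (apex x) (hequiv.trans hxy (hequiv.symm (apex y)))
      rcases lt_or_gt_of_ne hne with h' | h'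
      · exact ⟨_, _, h', h⟩
      · exact ⟨_, _, h', hequiv.symm h⟩
    have hlt {a' b' : ℝ} (hab' : a' < b') : R (p + a' • v) (p + b' • v) := by
      have hl : 0 < (b' - a') / (b - a) := div_pos (sub_pos.mpr hab') (sub_pos.mpr hab)
      have h := invariant_of_isometry (L := id) hunit hinv (fun _ => rfl) (fun _ _ => rfl)
        (fun _ _ => rfl) (fun _ => rfl) rfl hl (a' - (b' - a') / (b - a) * a) hR
      have hba : b - a ≠ 0 := (sub_pos.mpr hab).ne'
      convert h using 1
      · simp only [id, add_sub_cancel_left]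
        module
      · have : b' = (b' - a') / (b - a) * b + (a' - (b' - a') / (b - a) * a) := by
          field_simp
          ring
        simp only [id, add_sub_cancel_left]
        conv_lhs => rw [this]
        module
    have hall (a' b' : ℝ) : R (p + a' • v) (p + b' • v) := by
      rcases lt_trichotomy a' b' with h | rfl | h
      · exact hlt h
      · exact hequiv.refl _
      · exact hequiv.symm (hlt h)
    exact hnontriv₁ fun x y => hequiv.trans (hequiv.symm (apex x))
      (hequiv.trans (hall _ _) (apex y))
  · have hx := apex x
    rw [h] at hx
    exact hequiv.trans (hequiv.symm hx) (apex y)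
end

section
/- Let A = {p + t•v : t ∈ ℝ} be an inertial observer in Minkowski spacetime, with v a future-directed unit timelike vector. Then every event x lies on exactly one backward light cone with apex on A and on exactly one forward light cone with apex on A: there is a unique a ∈ A with η(x − a, x − a) = 0 and (x − a) 0 ≤ 0, and a unique b ∈ A with η(x − b, x − b) = 0 and (x − b) 0 ≥ 0. (Consequently the backward light cones with apices on A form a partition of Minkowski spacetime.) -/
/-- The orthogonal complement of a unit timelike vector `v` is negative semidefinite, and the time
component of a vector in it is controlled by its length. -/
lemma orthogonal_bound (u v : M4) (hunit : eta v v = 1) (horth : eta u v = 0) :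
    eta u u ≤ 0 ∧ u 0 ^ 2 - eta u u ≤ -eta u u * v 0 ^ 2 := by
  unfold eta at *
  have hcs : (u 1 * v 1 + u 2 * v 2 + u 3 * v 3) ^ 2 ≤
      (u 1 ^ 2 + u 2 ^ 2 + u 3 ^ 2) * (v 1 ^ 2 + v 2 ^ 2 + v 3 ^ 2) := by
    nlinarith [sq_nonneg (u 1 * v 2 - u 2 * v 1), sq_nonneg (u 1 * v 3 - u 3 * v 1),
      sq_nonneg (u 2 * v 3 - u 3 * v 2)]
  have h1 : u 1 * v 1 + u 2 * v 2 + u 3 * v 3 = u 0 * v 0 := by linarith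
  have h2 : v 1 ^ 2 + v 2 ^ 2 + v 3 ^ 2 = v 0 ^ 2 - 1 := by linarith
  rw [h1, h2] at hcs
  have hbound : u 0 ^ 2 - (u 0 * u 0 - u 1 * u 1 - u 2 * u 2 - u 3 * u 3) ≤
      -(u 0 * u 0 - u 1 * u 1 - u 2 * u 2 - u 3 * u 3) * v 0 ^ 2 := by
    linarith
  refine ⟨?_, hbound⟩
  have hv : 0 < v 0 ^ 2 := by nlinarith [sq_nonneg (v 1), sq_nonneg (v 2), sq_nonneg (v 3)]
  by_contra! hpos
  nlinarith [mul_pos hpos hv, sq_nonneg (u 1), sq_nonneg (u 2), sq_nonneg (u 3)]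

/-- The backward case in terms of the parameter on the world-line, with `w` the position of the
event relative to the base point of the observer. -/
lemma existsUnique_param (w v : M4) (hunit : eta v v = 1) (hfut : 0 < v 0) :
    ∃! t : ℝ, eta (w - t • v) (w - t • v) = 0 ∧ (w - t • v) 0 ≤ 0 := by
  set B := eta w v with hB
  set u : M4 := w - B • v with hu
  have horth : eta u v = 0 := by
    have h : eta u v = eta w v - B * eta v v := by
      simp only [hu, eta, Pi.sub_apply, Pi.smul_apply, smul_eq_mul]; ring
    rw [h, hunit, hB]; ring
  obtain ⟨hneg, hbd⟩ := orthogonal_bound u v hunit horth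
  have hsep : ∀ t : ℝ, eta (w - t • v) (w - t • v) = eta u u + (t - B) ^ 2 := by
    intro t
    have h : eta (w - t • v) (w - t • v) =
        eta u u - 2 * (t - B) * eta u v + (t - B) ^ 2 * eta v v := by
      simp only [hu, eta, Pi.sub_apply, Pi.smul_apply, smul_eq_mul]; ring
    rw [h, horth, hunit]; ring
  have htime : ∀ t : ℝ, (w - t • v) 0 = u 0 - (t - B) * v 0 := by
    intro t
    simp only [hu, Pi.sub_apply, Pi.smul_apply, smul_eq_mul]; ring
  simp only [hsep, htime]
  clear_value u B
  obtain ⟨r, hr, hrD⟩ : ∃ r : ℝ, 0 ≤ r ∧ r ^ 2 = -eta u u :=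
    ⟨√(-eta u u), Real.sqrt_nonneg _, Real.sq_sqrt (by linarith)⟩
  rw [← hrD] at hbd
  refine ⟨B + r, ⟨by linear_combination hrD, ?_⟩, ?_⟩
  · have : u 0 ≤ r * v 0 := abs_le_of_sq_le_sq' (by nlinarith) (by positivity) |>.2
    linarith
  · rintro t ⟨ht, ht0⟩
    have hsq : (t - B) ^ 2 = r ^ 2 := by linarith
    rcases sq_eq_sq_iff_eq_or_eq_neg.mp hsq with h | h
    · linarith
    · -- For the root `-√D` the event is on the backward cone only if the two roots coincide.
      rw [h] at ht0
      have hle : (r * v 0) ^ 2 ≤ (-u 0) ^ 2 :=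
        pow_le_pow_left₀ (by positivity) (by linarith) 2
      have hr0 : r = 0 :=
        pow_eq_zero_iff two_ne_zero |>.mp (le_antisymm (by nlinarith) (sq_nonneg r))
      linarith

/-- Every event lies on exactly one backward light cone and exactly one forward
light cone with apex on an inertial observer's world-line. -/
theorem unique_cone_apices (p v : M4) (hunit : eta v v = 1) (hfut : v 0 > 0)
    (A : Set M4) (hA : A = {x | ∃ t : ℝ, x = p + t • v}) (x : M4) :
    (∃! a : M4, a ∈ A ∧ eta (x - a) (x - a) = 0 ∧ (x - a) 0 ≤ 0) ∧
    (∃! b : M4, b ∈ A ∧ eta (x - b) (x - b) = 0 ∧ (x - b) 0 ≥ 0) := by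
  subst hA
  constructor
  · obtain ⟨t, ht, huniq⟩ := existsUnique_param (x - p) v hunit hfut
    simp only [sub_sub] at ht huniq
    refine ⟨p + t • v, ⟨⟨t, rfl⟩, ht⟩, ?_⟩
    rintro _ ⟨⟨s, rfl⟩, hs⟩
    rw [huniq s hs]
  · obtain ⟨t, ⟨ht, ht0⟩, huniq⟩ := existsUnique_param (-(x - p)) v hunit hfut
    have hneg : ∀ s : ℝ, -(x - p) - s • v = -(x - (p + (-s) • v)) := by
      intro s; module
    have heta : ∀ z : M4, eta (-z) (-z) = eta z z := by
      intro z; simp [eta]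
    simp only [hneg, heta, Pi.neg_apply, Left.neg_nonpos_iff] at ht ht0 huniq
    refine ⟨p + (-t) • v, ⟨⟨-t, rfl⟩, ht, ht0⟩, ?_⟩
    rintro _ ⟨⟨s, rfl⟩, hs⟩
    rw [← huniq (-s) (by simpa only [neg_neg] using hs), neg_neg]
end

section
/- (Radar characterization of Poincaré–Einstein simultaneity.) Let A = {p + t•v : t ∈ ℝ} be an inertial observer in Minkowski spacetime, with v a future-directed unit timelike vector, write a(t) = p + t•v, and let x be an event not lying on A. Then there exist unique real numbers t₁ < t₂ such that x − a(t₁) is null with η(x − a(t₁), v) > 0 (a light signal emitted at a(t₁) reaches x) and a(t₂) − x is null with η(a(t₂) − x, v) > 0 (a light signal emitted at x reaches a(t₂)); moreover, for t ∈ ℝ, the event a(t) is Poincaré–Einstein simultaneous with x relative to A (i.e., η(x − a(t), v) = 0) if and only if t = (t₁ + t₂)/2. -/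
/-- A null vector. -/
def IsNull (u : M4) : Prop := u ≠ 0 ∧ eta u u = 0

/-- A nonzero vector orthogonal to a unit timelike vector is spacelike. -/
theorem eta_self_neg_of_orthogonal {v n : M4} (hv : eta v v = 1) (hnv : eta n v = 0)
    (hn : n ≠ 0) : eta n n < 0 := by
  unfold eta at *
  -- Lagrange's identity supplies the Cauchy–Schwarz inequality for the spatial parts.
  have hcs : (n 0 * v 0) ^ 2 ≤
      (n 1 ^ 2 + n 2 ^ 2 + n 3 ^ 2) * (v 1 ^ 2 + v 2 ^ 2 + v 3 ^ 2) := by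
    rw [show n 0 * v 0 = n 1 * v 1 + n 2 * v 2 + n 3 * v 3 by linarith]
    nlinarith [sq_nonneg (n 1 * v 2 - n 2 * v 1), sq_nonneg (n 1 * v 3 - n 3 * v 1),
      sq_nonneg (n 2 * v 3 - n 3 * v 2)]
  rw [show v 1 ^ 2 + v 2 ^ 2 + v 3 ^ 2 = v 0 ^ 2 - 1 by linarith] at hcs
  have hv0 : 0 < v 0 ^ 2 := by nlinarith [sq_nonneg (v 1), sq_nonneg (v 2), sq_nonneg (v 3)]
  by_contra! h
  have hprod := mul_nonneg hv0.le h
  have hsum : n 1 ^ 2 + n 2 ^ 2 + n 3 ^ 2 ≤ 0 := by nlinarith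
  have h1 : n 1 = 0 := by
    nlinarith [sq_nonneg (n 1), sq_nonneg (n 2), sq_nonneg (n 3)]
  have h2 : n 2 = 0 := by
    nlinarith [sq_nonneg (n 1), sq_nonneg (n 2), sq_nonneg (n 3)]
  have h3 : n 3 = 0 := by
    nlinarith [sq_nonneg (n 1), sq_nonneg (n 2), sq_nonneg (n 3)]
  have h0 : n 0 = 0 := by
    have : n 0 * v 0 = 0 := by rw [h1, h2, h3] at hnv; linarith
    exact (mul_eq_zero.mp this).resolve_right (by rintro hz; simp [hz] at hv0)
  apply hn
  ext i
  fin_cases i <;> assumption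

theorem eta_neg_left (u v : M4) : eta (-u) v = -eta u v := by
  simp only [eta, Pi.neg_apply]; ring

theorem eta_neg_neg (u : M4) : eta (-u) (-u) = eta u u := by
  simp only [eta, Pi.neg_apply]; ring

theorem eta_add_smul_left {v n : M4} (hv : eta v v = 1) (hnv : eta n v = 0) (s : ℝ) :
    eta (n + s • v) v = s := by
  simp only [eta, Pi.add_apply, Pi.smul_apply, smul_eq_mul] at *
  linear_combination hnv + s * hv

theorem eta_add_smul_self {v n : M4} (hv : eta v v = 1) (hnv : eta n v = 0) (s : ℝ) :
    eta (n + s • v) (n + s • v) = s ^ 2 + eta n n := by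
  simp only [eta, Pi.add_apply, Pi.smul_apply, smul_eq_mul] at *
  linear_combination 2 * s * hnv + s ^ 2 * hv

/-- Radar characterization of Poincaré–Einstein simultaneity: a light signal
emitted by the observer at time `t₁`, reflected at the event `x` off the
world-line, returns at time `t₂`; the unique point of the world-line
PE-simultaneous with `x` is the one at time `(t₁ + t₂)/2`. -/
theorem radar_simultaneity (p v : M4) (hunit : eta v v = 1) (hfut : v 0 > 0)
    (a : ℝ → M4) (ha : ∀ t : ℝ, a t = p + t • v)
    (x : M4) (hx : ∀ t : ℝ, x ≠ a t) :
    ∃ t₁ t₂ : ℝ, t₁ < t₂ ∧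
      (IsNull (x - a t₁) ∧ eta (x - a t₁) v > 0) ∧
      (IsNull (a t₂ - x) ∧ eta (a t₂ - x) v > 0) ∧
      (∀ s₁ s₂ : ℝ, s₁ < s₂ →
        (IsNull (x - a s₁) ∧ eta (x - a s₁) v > 0) →
        (IsNull (a s₂ - x) ∧ eta (a s₂ - x) v > 0) →
        s₁ = t₁ ∧ s₂ = t₂) ∧
      (∀ t : ℝ, eta (x - a t) v = 0 ↔ t = (t₁ + t₂) / 2) := by
  obtain ⟨b, hb⟩ : ∃ b, b = eta (x - p) v := ⟨_, rfl⟩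
  obtain ⟨n, hn⟩ : ∃ n, n = x - p - b • v := ⟨_, rfl⟩
  have hnv : eta n v = 0 := by
    rw [hn]
    simp only [eta, Pi.sub_apply, Pi.smul_apply, smul_eq_mul] at *
    linear_combination -hb - b * hunit
  have hn0 : n ≠ 0 := by
    intro h
    apply hx b
    rw [ha, ← sub_eq_zero, ← h, hn]
    abel
  have hneg := eta_self_neg_of_orthogonal hunit hnv hn0
  have hdec : ∀ t, x - a t = n + (b - t) • v := by
    intro t
    rw [ha, hn, sub_smul]
    abel
  have hlin : ∀ t, eta (x - a t) v = b - t := fun t => by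
    rw [hdec, eta_add_smul_left hunit hnv]
  have hquad : ∀ t, eta (x - a t) (x - a t) = (b - t) ^ 2 + eta n n := fun t => by
    rw [hdec, eta_add_smul_self hunit hnv]
  have hlin' : ∀ t, eta (a t - x) v = t - b := fun t => by
    rw [← neg_sub, eta_neg_left, hlin, neg_sub]
  have hquad' : ∀ t, eta (a t - x) (a t - x) = (b - t) ^ 2 + eta n n := fun t => by
    rw [← neg_sub, eta_neg_neg, hquad]
  obtain ⟨r, hr0, hr⟩ : ∃ r : ℝ, 0 < r ∧ r ^ 2 = -eta n n :=
    ⟨√(-eta n n), Real.sqrt_pos.mpr (by linarith), Real.sq_sqrt (by linarith)⟩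
  refine ⟨b - r, b + r, by linarith, ⟨⟨sub_ne_zero.mpr (hx _), ?_⟩, ?_⟩,
    ⟨⟨sub_ne_zero.mpr (hx _).symm, ?_⟩, ?_⟩, ?_, ?_⟩
  · rw [hquad]; linear_combination hr
  · rw [hlin]; linarith
  · rw [hquad']; linear_combination hr
  · rw [hlin']; linarith
  · rintro s₁ s₂ - ⟨⟨-, h1⟩, hpos₁⟩ ⟨⟨-, h2⟩, hpos₂⟩
    rw [hquad] at h1
    rw [hlin] at hpos₁
    rw [hquad'] at h2
    rw [hlin'] at hpos₂
    -- The time orientation selects one root of each quadratic.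
    have e1 : b - s₁ = r := (sq_eq_sq₀ hpos₁.le hr0.le).mp (by linarith)
    have e2 : s₂ - b = r := (sq_eq_sq₀ hpos₂.le hr0.le).mp (by linear_combination h2 - hr)
    constructor <;> linarith
  · intro t
    rw [hlin]
    constructor <;> intro h <;> linarith
end

section
/- In Minkowski spacetime, the backward light cones of two timelike-separated events are disjoint: if p and q are events with η(q − p, q − p) > 0, then no event z satisfies both η(z − p, z − p) = 0 with (z − p) 0 ≤ 0 and η(z − q, z − q) = 0 with (z − q) 0 ≤ 0. (In particular, the backward light cones of any two distinct points on the world-line of an observer whose speed never exceeds that of light never intersect.) -/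
theorem eta_nonneg_of_null (u v : M4) (hu : eta u u = 0) (hu0 : u 0 ≤ 0)
    (hv : eta v v = 0) (hv0 : v 0 ≤ 0) : 0 ≤ eta u v := by
  unfold eta at *
  have hsq : (u 1 * v 1 + u 2 * v 2 + u 3 * v 3) ^ 2 ≤ (u 0 * v 0) ^ 2 := by
    have e : (u 0 * v 0) ^ 2 =
        (u 1 * u 1 + u 2 * u 2 + u 3 * u 3) * (v 1 * v 1 + v 2 * v 2 + v 3 * v 3) := by
      rw [show (u 0 * v 0) ^ 2 = (u 0 * u 0) * (v 0 * v 0) by ring]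
      congr 1 <;> linarith
    rw [e]
    -- Lagrange's identity: the difference of the two sides is the squared norm of `u⃗ × v⃗`.
    nlinarith [sq_nonneg (u 1 * v 2 - u 2 * v 1), sq_nonneg (u 1 * v 3 - u 3 * v 1),
      sq_nonneg (u 2 * v 3 - u 3 * v 2)]
  have := le_of_abs_le (abs_le_of_sq_le_sq hsq (mul_nonneg_of_nonpos_of_nonpos hu0 hv0))
  linarith

/-- The backward light cones of two timelike-separated events are disjoint. -/
theorem backward_cones_disjoint (p q : M4) (h : eta (q - p) (q - p) > 0) :
    ¬ ∃ z : M4,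
      (eta (z - p) (z - p) = 0 ∧ (z - p) 0 ≤ 0) ∧
      (eta (z - q) (z - q) = 0 ∧ (z - q) 0 ≤ 0) := by
  rintro ⟨z, ⟨hp, hp0⟩, hq, hq0⟩
  have key := eta_nonneg_of_null (z - p) (z - q) hp hp0 hq hq0
  have polar : eta (q - p) (q - p) =
      eta (z - p) (z - p) + eta (z - q) (z - q) - 2 * eta (z - p) (z - q) := by
    simp only [eta, Pi.sub_apply]
    ring
  linarith
end

section
/- (Reverse Cauchy–Schwarz for null vectors.) Let u and w be null vectors in Minkowski spacetime (u ≠ 0, w ≠ 0, η(u,u) = η(w,w) = 0) that point to the same side of the light cone, i.e., u 0 > 0 and w 0 > 0 (or both u 0 < 0 and w 0 < 0). Then η(u, w) ≥ 0, with equality η(u, w) = 0 if and only if u and w are proportional, i.e., there exists λ > 0 with w = λ•u. -/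
/-- For null vectors, `η(u, w)` is, up to the factor `2 * (u 0 * w 0)`, the squared Euclidean norm
of `u 0 • w - w 0 • u`, which is purely spatial. -/
theorem sum_sq_eq_eta {u w : M4} (hu : eta u u = 0) (hw : eta w w = 0) :
    (u 0 * w 1 - w 0 * u 1) ^ 2 + (u 0 * w 2 - w 0 * u 2) ^ 2 + (u 0 * w 3 - w 0 * u 3) ^ 2
      = 2 * (u 0 * w 0) * eta u w := by
  unfold eta at *
  linear_combination (-(w 0 ^ 2)) * hu - u 0 ^ 2 * hw

/-- Reverse Cauchy–Schwarz inequality for null vectors pointing to the same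
side of the light cone: `η(u,w) ≥ 0`, with equality iff `u` and `w` are
positively proportional. -/
theorem reverse_cauchy_schwarz_null (u w : M4)
    (hu : u ≠ 0) (hw : w ≠ 0)
    (hunull : eta u u = 0) (hwnull : eta w w = 0)
    (hside : (u 0 > 0 ∧ w 0 > 0) ∨ (u 0 < 0 ∧ w 0 < 0)) :
    eta u w ≥ 0 ∧ (eta u w = 0 ↔ ∃ l : ℝ, l > 0 ∧ w = l • u) := by
  have hpos : 0 < u 0 * w 0 := by
    rcases hside with ⟨h, h'⟩ | ⟨h, h'⟩
    · exact mul_pos h h'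
    · exact mul_pos_of_neg_of_neg h h'
  have hu0 : u 0 ≠ 0 := left_ne_zero_of_mul hpos.ne'
  have key := sum_sq_eq_eta hunull hwnull
  refine ⟨?_, fun h => ?_, ?_⟩
  · refine le_of_mul_le_mul_left ?_ (mul_pos two_pos hpos)
    rw [mul_zero, ← key]
    positivity
  · rw [h, mul_zero] at key
    have h1 : u 0 * w 1 - w 0 * u 1 = 0 := by
      apply pow_eq_zero_iff two_ne_zero |>.mp
      nlinarith [sq_nonneg (u 0 * w 1 - w 0 * u 1), sq_nonneg (u 0 * w 2 - w 0 * u 2),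
        sq_nonneg (u 0 * w 3 - w 0 * u 3)]
    have h2 : u 0 * w 2 - w 0 * u 2 = 0 := by
      apply pow_eq_zero_iff two_ne_zero |>.mp
      nlinarith [sq_nonneg (u 0 * w 1 - w 0 * u 1), sq_nonneg (u 0 * w 2 - w 0 * u 2),
        sq_nonneg (u 0 * w 3 - w 0 * u 3)]
    have h3 : u 0 * w 3 - w 0 * u 3 = 0 := by
      apply pow_eq_zero_iff two_ne_zero |>.mp
      nlinarith [sq_nonneg (u 0 * w 1 - w 0 * u 1), sq_nonneg (u 0 * w 2 - w 0 * u 2),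
        sq_nonneg (u 0 * w 3 - w 0 * u 3)]
    refine ⟨w 0 / u 0, ?_, ?_⟩
    · rcases hside with ⟨h, h'⟩ | ⟨h, h'⟩
      · exact div_pos h' h
      · exact div_pos_of_neg_of_neg h' h
    · have aux : ∀ i, u 0 * w i - w 0 * u i = 0 → w i = w 0 / u 0 * u i := by
        intro i hi
        field_simp
        linarith
      ext i
      rw [Pi.smul_apply, smul_eq_mul]
      apply aux
      fin_cases i
      · exact sub_eq_zero.mpr (mul_comm _ _)
      · exact h1
      · exact h2
      · exact h3
  · rintro ⟨l, -, rfl⟩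
    unfold eta at *
    simp only [Pi.smul_apply, smul_eq_mul]
    linear_combination l * hunull
end

section
/- (Asymmetry of relative reality; Galileo–Newton example.) Let A = {p + t•v : t ∈ ℝ} and B = {q + t•w : t ∈ ℝ} be two inertial observers in Minkowski spacetime, with v and w future-directed unit timelike vectors. Then there exist events G ∈ A and N ∈ B such that N is Poincaré–Einstein simultaneous with G relative to A (η(N − G, v) = 0) while G is not Poincaré–Einstein simultaneous with N relative to B (η(G − N, w) ≠ 0) if and only if v ≠ w, i.e., if and only if the two observers have a nonzero relative speed. -/
/-- A null vector orthogonal to a unit timelike vector is zero: the Cauchy–Schwarz inequality for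
the spatial parts forces the time component to vanish. -/
lemma eq_zero_of_eta_eq_zero (u v : M4) (hv : eta v v = 1) (huv : eta u v = 0)
    (hu : eta u u = 0) : u = 0 := by
  simp only [eta] at hv huv hu
  have h0 : u 0 ^ 2 ≤ 0 := by
    -- Lagrange's identity for the spatial parts
    have key : (u 1 ^ 2 + u 2 ^ 2 + u 3 ^ 2) * (v 1 ^ 2 + v 2 ^ 2 + v 3 ^ 2)
        - (u 1 * v 1 + u 2 * v 2 + u 3 * v 3) ^ 2
        = (u 1 * v 2 - u 2 * v 1) ^ 2 + (u 1 * v 3 - u 3 * v 1) ^ 2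
          + (u 2 * v 3 - u 3 * v 2) ^ 2 := by ring
    have e1 : u 1 ^ 2 + u 2 ^ 2 + u 3 ^ 2 = u 0 ^ 2 := by linarith
    have e2 : v 1 ^ 2 + v 2 ^ 2 + v 3 ^ 2 = v 0 ^ 2 - 1 := by linarith
    have e3 : u 1 * v 1 + u 2 * v 2 + u 3 * v 3 = u 0 * v 0 := by linarith
    rw [e1, e2, e3] at key
    nlinarith [sq_nonneg (u 1 * v 2 - u 2 * v 1), sq_nonneg (u 1 * v 3 - u 3 * v 1),
      sq_nonneg (u 2 * v 3 - u 3 * v 2)]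
  have z : ∀ i, u i ^ 2 ≤ 0 → u i = 0 := fun i h =>
    pow_eq_zero_iff two_ne_zero |>.mp (le_antisymm h (sq_nonneg _))
  have s1 := sq_nonneg (u 1)
  have s2 := sq_nonneg (u 2)
  have s3 := sq_nonneg (u 3)
  funext i
  apply z
  fin_cases i <;> simp only [Fin.zero_eta, Fin.mk_one, Fin.reduceFinMk] <;> nlinarith

/-- The equality case of the reversed Cauchy–Schwarz inequality for future-directed unit timelike
vectors. -/
lemma eq_of_eta_sq_eq_one (v w : M4) (hv : eta v v = 1) (hw : eta w w = 1)
    (hv0 : v 0 > 0) (hw0 : w 0 > 0) (h : eta v w ^ 2 = 1) : v = w := by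
  have hz : w - eta v w • v = 0 := by
    apply eq_zero_of_eta_eq_zero _ v hv
    · have : eta (w - eta v w • v) v = eta v w - eta v w * eta v v := by
        simp only [eta, Pi.sub_apply, Pi.smul_apply, smul_eq_mul]; ring
      rw [this, hv]; ring
    · have : eta (w - eta v w • v) (w - eta v w • v)
          = eta w w - 2 * eta v w ^ 2 + eta v w ^ 2 * eta v v := by
        simp only [eta, Pi.sub_apply, Pi.smul_apply, smul_eq_mul]; ring
      rw [this, hv, hw, h]; ring
  have hwv : w = eta v w • v := sub_eq_zero.mp hz
  rcases (by simpa using h : eta v w = 1 ∨ eta v w = -1) with h1 | h1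
  · rw [h1, one_smul] at hwv
    exact hwv.symm
  · have h2 := congrFun hwv 0
    rw [h1] at h2
    simp only [Pi.smul_apply, smul_eq_mul] at h2
    linarith

/-- Asymmetry of relative reality (Galileo–Newton example): there are events
`G` on `A` and `N` on `B` with `N` PE-simultaneous with `G` relative to `A`
but `G` not PE-simultaneous with `N` relative to `B`, iff the two inertial
observers have a nonzero relative speed. -/
theorem galileo_newton (p v q w : M4)
    (hvunit : eta v v = 1) (hwunit : eta w w = 1)
    (hvfut : v 0 > 0) (hwfut : w 0 > 0)
    (A : Set M4) (hA : A = {x | ∃ t : ℝ, x = p + t • v})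
    (B : Set M4) (hB : B = {x | ∃ t : ℝ, x = q + t • w}) :
    (∃ G ∈ A, ∃ N ∈ B, eta (N - G) v = 0 ∧ eta (G - N) w ≠ 0) ↔ v ≠ w := by
  subst hA hB
  constructor
  · rintro ⟨G, -, N, -, h1, h2⟩ rfl
    apply h2
    have : eta (G - N) v = -eta (N - G) v := by
      simp only [eta, Pi.sub_apply]; ring
    rw [this, h1, neg_zero]
  · intro hne
    have hc : eta v w ^ 2 - 1 ≠ 0 := fun h =>
      hne (eq_of_eta_sq_eq_one v w hvunit hwunit hvfut hwfut (sub_eq_zero.mp h))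
    obtain ⟨t, ht⟩ : ∃ t : ℝ,
        eta v w * eta (q - p) v - eta (q - p) w + t * (eta v w ^ 2 - 1) ≠ 0 := by
      by_contra! hall
      apply hc
      linarith [hall 0, hall 1]
    refine ⟨p + (eta (q - p) v + t * eta v w) • v, ⟨_, rfl⟩, q + t • w, ⟨_, rfl⟩, ?_, ?_⟩
    · have : ∀ s : ℝ, eta (q + t • w - (p + s • v)) v
          = eta (q - p) v + t * eta v w - s * eta v v := by
        intro s
        simp only [eta, Pi.sub_apply, Pi.add_apply, Pi.smul_apply, smul_eq_mul]; ring
      rw [this, hvunit]; ring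
    · have : ∀ s : ℝ, eta (p + s • v - (q + t • w)) w
          = -eta (q - p) w + s * eta v w - t * eta w w := by
        intro s
        simp only [eta, Pi.sub_apply, Pi.add_apply, Pi.smul_apply, smul_eq_mul]; ring
      rw [this, hwunit]
      convert ht using 1
      ring
end

section
/- In Minkowski spacetime, two events have the same backward light cone only if they are equal: for events m and n, {z : η(z − m, z − m) = 0 and (z − m) 0 ≤ 0} = {z : η(z − n, z − n) = 0 and (z − n) 0 ≤ 0} if and only if m = n. (So in the observed-simultaneity version of presentism, the realities of two observers at points M and N coincide if and only if M = N.) -/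
/-- Two events have the same backward light cone iff they are equal. -/
theorem backward_cone_injective (m n : M4) :
    {z : M4 | eta (z - m) (z - m) = 0 ∧ (z - m) 0 ≤ 0} =
      {z : M4 | eta (z - n) (z - n) = 0 ∧ (z - n) 0 ≤ 0} ↔ m = n := by
  refine ⟨fun h => ?_, fun h => by rw [h]⟩
  have hm : m ∈ {z : M4 | eta (z - n) (z - n) = 0 ∧ (z - n) 0 ≤ 0} := by
    rw [← h]; simp [eta]
  have hn : n ∈ {z : M4 | eta (z - m) (z - m) = 0 ∧ (z - m) 0 ≤ 0} := by
    rw [h]; simp [eta]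
  simp only [Set.mem_ofPred_eq, eta, Pi.sub_apply] at hm hn
  have h0 : m 0 - n 0 = 0 := by linarith [hm.2, hn.2]
  have hs := hm.1
  rw [h0] at hs
  ext i
  rw [← sub_eq_zero]
  fin_cases i
  · exact h0
  all_goals
    refine mul_self_eq_zero.mp (le_antisymm ?_ (mul_self_nonneg _))
    simp only [Fin.mk_one, Fin.reduceFinMk]
    linarith [mul_self_nonneg (m 1 - n 1), mul_self_nonneg (m 2 - n 2),
      mul_self_nonneg (m 3 - n 3)]
end

section
/- (Classification of natural orderings.) Let r be a strict total order on ℝ (irreflexive, transitive, and for all x ≠ y, r x y or r y x) such that for every x ∈ ℝ the up-set {y : r x y} is a half-line of ℝ, i.e., is of one of the forms {y : y < a}, {y : y ≤ a}, {y : y > a}, or {y : y ≥ a} for some a ∈ ℝ. Then r is the standard order or its reverse: either (for all x, y: r x y ↔ x < y) or (for all x, y: r x y ↔ y < x). -/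
/-!
An up-set `U x = {y | r x y}` that is a right half-line does not contain `x`, so it lies in `(x, ∞)`;
dually a left half-line `U x` lies in `(-∞, x)`. By transitivity and totality the up-sets are nested,
and a left half-line is never nested with a right one, so all up-sets point the same way. If all
point right, `r x y` implies `x < y`, and totality upgrades this implication to an equivalence;
the other case is symmetric.
-/

/-- Classification of natural orderings: a strict total order on ℝ whose
up-sets are half-lines is the standard order or its reverse. -/
theorem natural_orderings (r : ℝ → ℝ → Prop)
    (hirr : ∀ x : ℝ, ¬ r x x)
    (htrans : ∀ x y z : ℝ, r x y → r y z → r x z)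
    (htotal : ∀ x y : ℝ, x ≠ y → r x y ∨ r y x)
    (hhalf : ∀ x : ℝ, ∃ a : ℝ,
      {y : ℝ | r x y} = {y : ℝ | y < a} ∨
      {y : ℝ | r x y} = {y : ℝ | y ≤ a} ∨
      {y : ℝ | r x y} = {y : ℝ | a < y} ∨
      {y : ℝ | r x y} = {y : ℝ | a ≤ y}) :
    (∀ x y : ℝ, r x y ↔ x < y) ∨ (∀ x y : ℝ, r x y ↔ y < x) := by
  -- Each up-set contains a ray pointing in its direction and lies strictly on that side of `x`.
  have key : ∀ x : ℝ, ((∃ c, ∀ y, c < y → r x y) ∧ ∀ y, r x y → x < y) ∨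
      ((∃ c, ∀ y, y < c → r x y) ∧ ∀ y, r x y → y < x) := by
    intro x
    have hx := hirr x
    obtain ⟨a, h | h | h | h⟩ := hhalf x <;>
      simp only [Set.ext_iff, Set.mem_ofPred_eq] at h <;> rw [h] at hx
    · refine Or.inr ⟨⟨a, fun y hy => (h y).2 hy⟩, fun y hy => ?_⟩
      have := (h y).1 hy
      linarith
    · refine Or.inr ⟨⟨a, fun y hy => (h y).2 hy.le⟩, fun y hy => ?_⟩
      have := (h y).1 hy
      linarith
    · refine Or.inl ⟨⟨a, fun y hy => (h y).2 hy⟩, fun y hy => ?_⟩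
      have := (h y).1 hy
      linarith
    · refine Or.inl ⟨⟨a, fun y hy => (h y).2 hy.le⟩, fun y hy => ?_⟩
      have := (h y).1 hy
      linarith
  -- No right-pointing up-set coexists with a left-pointing one.
  have excl : ∀ x x' c c' : ℝ, (∀ y, c < y → r x y) → (∀ y, r x y → x < y) →
      (∀ y, y < c' → r x' y) → (∀ y, r x' y → y < x') → False := by
    intro x x' c c' h1 h2 h3 h4
    have hne : x ≠ x' := by
      rintro rfl
      have hl := h2 _ (h3 (min c' x - 1) (by linarith [min_le_left c' x]))
      linarith [min_le_right c' x]
    rcases htotal x x' hne with h | h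
    · have hl := h2 _ (htrans _ _ _ h (h3 (min c' x - 1) (by linarith [min_le_left c' x])))
      linarith [min_le_right c' x]
    · have hl := h4 _ (htrans _ _ _ h (h1 (max c x' + 1) (by linarith [le_max_left c x'])))
      linarith [le_max_right c x']
  rcases key 0 with ⟨⟨c, h1⟩, h2⟩ | ⟨⟨c, h1⟩, h2⟩
  · left
    have all : ∀ x y, r x y → x < y := by
      intro x
      rcases key x with ⟨_, h⟩ | ⟨⟨c', h3⟩, h4⟩
      · exact h
      · exact (excl 0 x c c' h1 h2 h3 h4).elim
    exact fun x y => ⟨all x y, fun h =>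
      (htotal x y h.ne).resolve_right fun h' => (all y x h').not_gt h⟩
  · right
    have all : ∀ x y, r x y → y < x := by
      intro x
      rcases key x with ⟨⟨c', h3⟩, h4⟩ | ⟨_, h⟩
      · exact (excl x 0 c' c h3 h4 h1 h2).elim
      · exact h
    exact fun x y => ⟨all x y, fun h =>
      (htotal x y h.ne').resolve_right fun h' => (all y x h').not_gt h⟩
end
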